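/- arXiv:2102.01616 — 2 statements merged into one kernel-verified Lean document; each statement's English description precedes it below -/
import Mathlib

section
/- Let (Ω, F, P) be a probability space, let X : [0,∞) × Ω → ℝ be a jointly measurable stochastic process whose sample paths t ↦ X_t(ω) are continuous for almost every ω, and let f : ℝ → ℝ. Assume: (A1)(i) there exist constants K > 0 and η* > 0 such that for every η ∈ (0, η*) and every x ∈ ℝ one has sup_{y ∈ [x, x+η)} |f(y)| ≥ η^K and sup_{y ∈ (x−η, x]} |f(y)| ≥ η^K; (A1)(ii) f is continuously differentiable and there is a constant C₀ > 0 with |f'(x)| ≤ C₀(1+|x|)^{C₀} for all x ∈ ℝ; (A2)(i) there exists ρ > 0 such that for every r > 1, sup{ (E|X_t − X_s|^r)^{1/r} / (t−s)^ρ : 0 ≤ s < t < s+1 } < ∞; (A2)(ii) for every r > 1, sup_{t ≥ 0} (E|X_t|^r)^{1/r} < ∞; (A2)(iii) there exist positive constants Δ*, γ, λ, μ, K₁, K₂, K₃ such that for every s ≥ 0, every Δ ∈ (0, Δ*) and every η ∈ (0, K₃ Δ^γ), P[ sup_{t ∈ [s, s+Δ]} |X_t − X_s| ≤ η ] ≤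 K₁ exp(−K₂ η^{−λ} Δ^μ). Then for every ε > 0, almost surely T^{ε−1} ∫₀^T f(X_t)² dt → ∞ as T → ∞. -/
open Set Filter MeasureTheory
open scoped NNReal Topology

/-!
Fix a small `b > 0`. By Borel–Cantelli, almost surely for all large `j` the following holds on the
time interval `[j, j + 1]`: the path is `α`-Hölder with constant `j ^ b` (Kolmogorov's chaining
argument, with moments of an order chosen large in terms of `b`), `|X j| ≤ j ^ b` (Markov's
inequality), and the path moves by more than `j ^ (-b)` (small ball estimate). By the intermediate
value theorem it then sweeps through an interval of length `j ^ (-b)`, on which `|f|` reaches a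
height `j ^ (-C * b)`. As `f` is polynomially Lipschitz, `f ∘ X` is Hölder with a constant that is a
power of `j ^ b`, so it keeps half of this height for a time `j ^ (-C' * b)`. Choosing `b` small
in terms of `ε`, each interval `[j, j + 1]` contributes at least `j ^ (-ε / 2)` to the integral, and
about `T` such intervals fit into `[0, T]`.
-/

section HolderPaths

variable {E F : Type*} [PseudoMetricSpace E] [PseudoMetricSpace F]

theorem holderOnWith_of_dist_le {C r : ℝ≥0} {g : E → F} {s : Set E}
    (h : ∀ u ∈ s, ∀ v ∈ s, dist (g u) (g v) ≤ C * dist u v ^ (r : ℝ)) : HolderOnWith C r g s := by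
  intro u hu v hv
  rw [edist_nndist, edist_nndist, ← ENNReal.coe_rpow_of_nonneg _ r.coe_nonneg]
  exact_mod_cast h u hu v hv

theorem holderOnWith_closure {C r : ℝ≥0} {g : E → F} {s : Set E} (h : HolderOnWith C r g s)
    (hg : ContinuousOn g (closure s)) : HolderOnWith C r g (closure s) := by
  intro u hu v hv
  have huv : (u, v) ∈ closure (s ×ˢ s) := closure_prod_eq (s := s) (t := s) ▸ ⟨hu, hv⟩
  refine le_on_closure (f := fun z : E × E => edist (g z.1) (g z.2))
    (g := fun z => (C : ENNReal) * edist z.1 z.2 ^ (r : ℝ)) (fun z hz => h _ hz.1 _ hz.2)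
    ?_ ?_ huv
  · rw [closure_prod_eq]
    exact continuous_edist.comp_continuousOn (hg.prodMap hg)
  · exact ((ENNReal.continuous_const_mul ENNReal.coe_ne_top).comp
      (ENNReal.continuous_rpow_const.comp continuous_edist)).continuousOn

/-- The largest multiple of `2⁻ᵐ` that is at most `u`, for `0 ≤ u`. -/
noncomputable def dyadicFloor (m : ℕ) (u : ℝ) : ℝ := ⌊u * 2 ^ m⌋₊ / 2 ^ m

/-- The dyadic increments of `x` on `[0, 1)` satisfy a Hölder bound with exponent `α` and
constant `c`. -/
def DyadicHolder (x : ℝ → E) (α c : ℝ) : Prop :=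
  ∀ m k : ℕ, k + 1 < 2 ^ m →
    dist (x (k / 2 ^ m)) (x ((k + 1) / 2 ^ m)) ≤ c * ((1 / 2) ^ m : ℝ) ^ α

theorem floor_mul_two_pow_lt {u : ℝ} (hu : u < 1) (m : ℕ) : ⌊u * 2 ^ m⌋₊ < 2 ^ m := by
  rw [Nat.floor_lt' (by positivity)]
  push_cast
  exact mul_lt_of_lt_one_left (by positivity) hu

theorem dyadicFloor_mem_Ico {u : ℝ} (hu : u < 1) (m : ℕ) : dyadicFloor m u ∈ Ico (0 : ℝ) 1 := by
  refine ⟨by unfold dyadicFloor; positivity, ?_⟩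
  rw [dyadicFloor, div_lt_one (by positivity)]
  exact_mod_cast floor_mul_two_pow_lt hu m

theorem tendsto_dyadicFloor {u : ℝ} (hu : 0 ≤ u) :
    Tendsto (fun m => dyadicFloor m u) atTop (𝓝 u) :=
  (tendsto_nat_floor_mul_div_atTop hu).comp (tendsto_pow_atTop_atTop_of_one_lt one_lt_two)

variable {x : ℝ → E} {α c : ℝ}

theorem DyadicHolder.dist_dyadicFloor_succ_le (h : DyadicHolder x α c) (hc : 0 ≤ c) {u : ℝ}
    (hu : u < 1) (m : ℕ) :
    dist (x (dyadicFloor m u)) (x (dyadicFloor (m + 1) u)) ≤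
      c * ((1 / 2) ^ (m + 1) : ℝ) ^ α := by
  have halve : ⌊u * 2 ^ m⌋₊ = ⌊u * 2 ^ (m + 1)⌋₊ / 2 := by
    rw [← Nat.floor_div_ofNat, pow_succ]
    congr 1
    ring
  have hlt := floor_mul_two_pow_lt hu (m + 1)
  have hcoarse : dyadicFloor m u = (2 * ⌊u * 2 ^ m⌋₊ : ℕ) / 2 ^ (m + 1) := by
    rw [dyadicFloor, pow_succ]
    push_cast
    field_simp
  rcases (by omega : ⌊u * 2 ^ (m + 1)⌋₊ = 2 * ⌊u * 2 ^ m⌋₊ ∨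
    ⌊u * 2 ^ (m + 1)⌋₊ = 2 * ⌊u * 2 ^ m⌋₊ + 1) with heven | hodd
  · rw [hcoarse, dyadicFloor, heven, dist_self]
    positivity
  · rw [hcoarse, dyadicFloor, hodd, Nat.cast_succ]
    exact h (m + 1) _ (hodd ▸ hlt)

theorem DyadicHolder.dist_dyadicFloor_le (h : DyadicHolder x α c) (hα : 0 < α) (hc : 0 ≤ c)
    (hx : ContinuousOn x (Ico 0 1)) {u : ℝ} (hu : u ∈ Ico (0 : ℝ) 1) (m : ℕ) :
    dist (x (dyadicFloor m u)) (x u) ≤ c * ((1 / 2) ^ m : ℝ) ^ α / (1 - (1 / 2) ^ α) := by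
  rw [← Real.rpow_pow_comm (by norm_num)]
  refine dist_le_of_le_geometric_of_tendsto (f := fun m => x (dyadicFloor m u)) _ _
    (Real.rpow_lt_one (by norm_num) (by norm_num) hα) (fun n => ?_) ?_ m
  · refine (h.dist_dyadicFloor_succ_le hc hu.2 n).trans ?_
    rw [Real.rpow_pow_comm (by norm_num)]
    gcongr c * ?_ ^ α
    exact pow_le_pow_of_le_one (by norm_num) (by norm_num) n.le_succ
  · exact (hx u hu).tendsto.comp (tendsto_nhdsWithin_iff.2
      ⟨tendsto_dyadicFloor hu.1, .of_forall fun n => dyadicFloor_mem_Ico hu.2 n⟩)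

theorem DyadicHolder.dist_dyadicFloor_dyadicFloor_le (h : DyadicHolder x α c) (hc : 0 ≤ c)
    {s t : ℝ} (hst : s ≤ t) (ht : t < 1) {m : ℕ} (hm : t - s ≤ (1 / 2) ^ m) :
    dist (x (dyadicFloor m s)) (x (dyadicFloor m t)) ≤ c * ((1 / 2) ^ m : ℝ) ^ α := by
  have hgap : t * 2 ^ m ≤ s * 2 ^ m + 1 := by
    rw [div_pow, one_pow, le_div_iff₀ (by positivity)] at hm
    linarith
  have hlower : ⌊s * 2 ^ m⌋₊ ≤ ⌊t * 2 ^ m⌋₊ := by gcongr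
  have hupper : ⌊t * 2 ^ m⌋₊ ≤ ⌊s * 2 ^ m⌋₊ + 1 := by
    rw [← Nat.lt_add_one_iff, Nat.floor_lt' (by omega)]
    push_cast
    linarith [Nat.lt_floor_add_one (s * 2 ^ m)]
  have hlt := floor_mul_two_pow_lt ht m
  rcases hlower.eq_or_lt with heq | hlt'
  · rw [dyadicFloor, dyadicFloor, heq, dist_self]
    positivity
  · have hsucc : ⌊t * 2 ^ m⌋₊ = ⌊s * 2 ^ m⌋₊ + 1 := by omega
    rw [dyadicFloor, dyadicFloor, hsucc, Nat.cast_succ]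
    exact h m _ (hsucc ▸ hlt)

/-- The factor lost when a Hölder bound is extended from dyadic increments to all increments. -/
noncomputable def chainingConst (α : ℝ) : ℝ := (1 + 2 / (1 - (1 / 2) ^ α)) * 2 ^ α

theorem chainingConst_pos (hα : 0 < α) : 0 < chainingConst α := by
  have : ((1 / 2 : ℝ)) ^ α < 1 := Real.rpow_lt_one (by norm_num) (by norm_num) hα
  have : 0 < 1 - (1 / 2 : ℝ) ^ α := by linarith
  unfold chainingConst
  positivity

theorem DyadicHolder.dist_le (h : DyadicHolder x α c) (hα : 0 < α) (hc : 0 ≤ c)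
    (hx : ContinuousOn x (Ico 0 1)) {s t : ℝ} (hs : 0 ≤ s) (hst : s < t) (ht : t < 1) :
    dist (x s) (x t) ≤ chainingConst α * c * (t - s) ^ α := by
  obtain ⟨m, hm_lt, hm_le⟩ := exists_nat_pow_near_of_lt_one (x := t - s) (y := 1 / 2)
    (by linarith) (by linarith) (by norm_num) (by norm_num)
  have hs_approx := h.dist_dyadicFloor_le hα hc hx ⟨hs, hst.trans ht⟩ m
  have ht_approx := h.dist_dyadicFloor_le hα hc hx ⟨hs.trans hst.le, ht⟩ m
  have hmid := h.dist_dyadicFloor_dyadicFloor_le hc hst.le ht hm_le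
  have hmesh : ((1 / 2) ^ m : ℝ) ^ α ≤ 2 ^ α * (t - s) ^ α := by
    rw [← Real.mul_rpow (by norm_num) (by linarith)]
    gcongr
    rw [pow_succ] at hm_lt
    linarith
  have hgap : 0 < 1 - (1 / 2 : ℝ) ^ α :=
    sub_pos.2 (Real.rpow_lt_one (by norm_num) (by norm_num) hα)
  calc dist (x s) (x t)
      ≤ dist (x s) (x (dyadicFloor m s)) + dist (x (dyadicFloor m s)) (x (dyadicFloor m t)) +
          dist (x (dyadicFloor m t)) (x t) := dist_triangle4 ..
    _ ≤ c * ((1 / 2) ^ m : ℝ) ^ α / (1 - (1 / 2) ^ α) + c * ((1 / 2) ^ m : ℝ) ^ α +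
          c * ((1 / 2) ^ m : ℝ) ^ α / (1 - (1 / 2) ^ α) := by
        rw [dist_comm] at hs_approx
        gcongr
    _ = (1 + 2 / (1 - (1 / 2) ^ α)) * c * ((1 / 2) ^ m : ℝ) ^ α := by ring
    _ ≤ (1 + 2 / (1 - (1 / 2) ^ α)) * c * (2 ^ α * (t - s) ^ α) := by gcongr
    _ = chainingConst α * c * (t - s) ^ α := by
        rw [chainingConst]
        ring

theorem DyadicHolder.holderOnWith {α C : ℝ≥0} (h : DyadicHolder x α (C / chainingConst α))
    (hα : 0 < α) (hx : ContinuousOn x (Icc 0 1)) : HolderOnWith C α x (Icc 0 1) := by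
  have hα' : (0 : ℝ) < α := by exact_mod_cast hα
  have hκ := chainingConst_pos hα'
  have hdist {s t : ℝ} (hs : 0 ≤ s) (hst : s < t) (ht : t < 1) :
      dist (x s) (x t) ≤ C * (t - s) ^ (α : ℝ) := by
    have := h.dist_le hα' (by positivity) (hx.mono Ico_subset_Icc_self) hs hst ht
    rwa [mul_div_cancel₀ _ hκ.ne'] at this
  have hIco : closure (Ico (0 : ℝ) 1) = Icc 0 1 := closure_Ico zero_ne_one
  rw [← hIco] at hx ⊢
  refine holderOnWith_closure (holderOnWith_of_dist_le fun s hs t ht => ?_) hx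
  rcases lt_trichotomy s t with hst | rfl | hts
  · rw [dist_comm s, Real.dist_eq, abs_of_pos (sub_pos.2 hst)]
    exact hdist hs.1 hst ht.2
  · simp [Real.zero_rpow hα'.ne']
  · rw [dist_comm, Real.dist_eq, abs_of_pos (sub_pos.2 hts)]
    exact hdist ht.1 hts hs.2

end HolderPaths

section IntegralLowerBound

/-- `f` is Lipschitz on every ball around the origin, with a constant growing at most polynomially
in the radius. -/
def PolynomiallyLipschitz (f : ℝ → ℝ) : Prop :=
  ∃ C p : ℝ≥0, ∀ R : ℝ≥0, LipschitzOnWith (C * (1 + R) ^ (p : ℝ)) f (Metric.closedBall 0 R)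

/-- Condition (A1)(i): on every interval of small length `η`, to the left or to the right of any
point, `|f|` gets at least as large as a fixed power of `η`. The suprema are taken in `EReal`, so
that they are not junk where `f` is unbounded. -/
def PolynomiallyNonflat (f : ℝ → ℝ) : Prop :=
  ∃ K > (0 : ℝ), ∃ ηs > (0 : ℝ), ∀ η ∈ Ioo (0 : ℝ) ηs, ∀ x : ℝ,
    (((η ^ K : ℝ) : EReal) ≤ ⨆ y ∈ Ico x (x + η), ((|f y| : ℝ) : EReal)) ∧
    (((η ^ K : ℝ) : EReal) ≤ ⨆ y ∈ Ioc (x - η) x, ((|f y| : ℝ) : EReal))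

variable {f : ℝ → ℝ}

theorem PolynomiallyLipschitz.of_abs_deriv_le (hf : Differentiable ℝ f) {C p : ℝ} (hC : 0 ≤ C)
    (hp : 0 ≤ p) (hderiv : ∀ x, |deriv f x| ≤ C * (1 + |x|) ^ p) : PolynomiallyLipschitz f := by
  lift C to ℝ≥0 using hC
  lift p to ℝ≥0 using hp
  refine ⟨C, p, fun R => (convex_closedBall 0 (R : ℝ)).lipschitzOnWith_of_nnnorm_deriv_le
    (fun x _ => hf x) fun x hx => ?_⟩
  rw [mem_closedBall_zero_iff] at hx
  have : C * (1 + |x|) ^ (p : ℝ) ≤ C * (1 + R : ℝ) ^ (p : ℝ) := by gcongr; exact hx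
  exact_mod_cast (hderiv x).trans this

theorem PolynomiallyLipschitz.continuous (hf : PolynomiallyLipschitz f) : Continuous f := by
  obtain ⟨C, p, hf⟩ := hf
  refine continuous_iff_continuousAt.2 fun x => (hf (‖x‖₊ + 1)).continuousOn.continuousAt ?_
  refine Metric.closedBall_mem_nhds_of_mem ?_
  simp

theorem PolynomiallyLipschitz.exists_eventually_lipschitzOnWith (hf : PolynomiallyLipschitz f) :
    ∃ p > (0 : ℝ), ∀ᶠ y : ℝ≥0 in atTop,
      LipschitzOnWith (y ^ p) f (Metric.closedBall 0 ↑(2 * y)) := by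
  obtain ⟨C, p, hf⟩ := hf
  refine ⟨p + 1, by positivity, ?_⟩
  filter_upwards [eventually_ge_atTop 1, eventually_ge_atTop (C * 3 ^ (p : ℝ))] with y hy1 hyC
  refine (hf (2 * y)).weaken ?_
  calc C * (1 + 2 * y) ^ (p : ℝ)
      ≤ C * (3 * y) ^ (p : ℝ) := by
        gcongr
        calc 1 + 2 * y ≤ y + 2 * y := by gcongr
          _ = 3 * y := by ring
    _ = C * 3 ^ (p : ℝ) * y ^ (p : ℝ) := by rw [NNReal.mul_rpow, mul_assoc]
    _ ≤ y * y ^ (p : ℝ) := by gcongr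
    _ = y ^ ((p : ℝ) + 1) := by
        rw [NNReal.rpow_add_one (zero_lt_one.trans_le hy1).ne', mul_comm]

theorem Ico_subset_image_or_Ioc_subset_image {x : ℝ → ℝ} {a b η : ℝ}
    (hx : ContinuousOn x (Icc a b)) (hab : a ≤ b) (hη : η < |x b - x a|) :
    Ico (x a) (x a + η) ⊆ x '' Icc a b ∨ Ioc (x a - η) (x a) ⊆ x '' Icc a b := by
  rcases lt_abs.1 hη with hup | hdown
  · refine .inl (Subset.trans (fun z hz => ?_) (intermediate_value_Icc hab hx))
    exact ⟨hz.1, by linarith [hz.2]⟩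
  · refine .inr (Subset.trans (fun z hz => ?_) (intermediate_value_Icc' hab hx))
    exact ⟨by linarith [hz.1], hz.2⟩

theorem PolynomiallyNonflat.exists_eventually_rpow_neg_lt (hf : PolynomiallyNonflat f) :
    ∃ q > (0 : ℝ), ∀ᶠ y : ℝ in atTop, ∀ (x : ℝ → ℝ) (a b : ℝ), ContinuousOn x (Icc a b) → a ≤ b →
      y⁻¹ < |x b - x a| → ∃ t ∈ Icc a b, y ^ (-q) < |f (x t)| := by
  obtain ⟨K, hK, ηs, hηs, hf⟩ := hf
  refine ⟨K + 1, by positivity, ?_⟩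
  filter_upwards [eventually_gt_atTop 1, tendsto_inv_atTop_zero.eventually_lt_const hηs]
    with y hy1 hyη x a b hx hab hmove
  have hy0 : 0 < y := by linarith
  have hlt : ((y ^ (-(K + 1)) : ℝ) : EReal) < ((y⁻¹ ^ K : ℝ) : EReal) := by
    rw [Real.inv_rpow hy0.le, ← Real.rpow_neg hy0.le]
    exact_mod_cast Real.rpow_lt_rpow_of_exponent_lt hy1 (by linarith)
  obtain ⟨hright, hleft⟩ := hf y⁻¹ ⟨by positivity, hyη⟩ (x a)
  rcases Ico_subset_image_or_Ioc_subset_image hx hab hmove with hsub | hsub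
  · obtain ⟨z, hz, hfz⟩ := lt_biSup_iff.1 (hlt.trans_le hright)
    obtain ⟨t, ht, rfl⟩ := hsub hz
    exact ⟨t, ht, by exact_mod_cast hfz⟩
  · obtain ⟨z, hz, hfz⟩ := lt_biSup_iff.1 (hlt.trans_le hleft)
    obtain ⟨t, ht, rfl⟩ := hsub hz
    exact ⟨t, ht, by exact_mod_cast hfz⟩

theorem exists_Icc_subset_Icc_inter_closedBall {t δ : ℝ} (ht : t ∈ Icc (0 : ℝ) 1) (hδ : 0 ≤ δ)
    (hδ' : δ ≤ 1 / 2) : ∃ c, Icc c (c + δ) ⊆ Icc 0 1 ∩ Metric.closedBall t δ := by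
  rw [Real.closedBall_eq_Icc]
  rcases le_total t (1 / 2) with h | h
  · exact ⟨t, fun u hu => ⟨⟨by linarith [ht.1, hu.1], by linarith [hu.2]⟩,
      ⟨by linarith [hu.1], by linarith [hu.2]⟩⟩⟩
  · exact ⟨t - δ, fun u hu => ⟨⟨by linarith [hu.1], by linarith [ht.2, hu.2]⟩,
      ⟨by linarith [hu.1], by linarith [hu.2]⟩⟩⟩

theorem mul_sq_le_integral_sq_of_holderOnWith {g : ℝ → ℝ} {C α : ℝ≥0} (hα : 0 < α)
    (hg : HolderOnWith C α g (Icc 0 1)) {t δ h : ℝ} (ht : t ∈ Icc (0 : ℝ) 1) (hδ : 0 ≤ δ)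
    (hδ' : δ ≤ 1 / 2) (hh : 0 ≤ h) (hosc : C * δ ^ (α : ℝ) ≤ h) (hgt : 2 * h ≤ |g t|) :
    δ * h ^ 2 ≤ ∫ u in (0 : ℝ)..1, g u ^ 2 := by
  obtain ⟨c, hc⟩ := exists_Icc_subset_Icc_inter_closedBall ht hδ hδ'
  have hcδ : c ≤ c + δ := by linarith
  have hsq : ContinuousOn (fun u => g u ^ 2) (Icc 0 1) := (hg.continuousOn hα).pow 2
  have hlarge {u : ℝ} (hu : u ∈ Icc c (c + δ)) : h ^ 2 ≤ g u ^ 2 := by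
    have hdist : |g t - g u| ≤ h :=
      (hg.dist_le_of_le ht (hc hu).1 (Metric.mem_closedBall'.1 (hc hu).2)).trans hosc
    rw [← sq_abs (g u)]
    gcongr
    linarith [abs_sub_abs_le_abs_sub (g t) (g u)]
  calc δ * h ^ 2
      = ∫ _ in c..(c + δ), h ^ 2 := by simp
    _ ≤ ∫ u in c..(c + δ), g u ^ 2 := by
        refine intervalIntegral.integral_mono_on hcδ intervalIntegrable_const ?_ fun u => hlarge
        refine (hsq.mono ?_).intervalIntegrable
        exact uIcc_of_le hcδ ▸ hc.trans inter_subset_left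
    _ ≤ ∫ u in (0 : ℝ)..1, g u ^ 2 :=
        intervalIntegral.integral_mono_interval (hc (left_mem_Icc.2 hcδ)).1.1 hcδ
          (hc (right_mem_Icc.2 hcδ)).1.2 (.of_forall fun u => sq_nonneg _)
          (hsq.intervalIntegrable_of_Icc zero_le_one)

theorem mapsTo_closedBall_of_holderOnWith {x : ℝ → ℝ} {y α : ℝ≥0}
    (hx : HolderOnWith y α x (Icc 0 1)) (hx0 : |x 0| ≤ y) :
    MapsTo x (Icc 0 1) (Metric.closedBall 0 ↑(2 * y)) := by
  intro t ht
  have hunit : dist t 0 ≤ 1 := by simpa [abs_of_nonneg ht.1] using ht.2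
  have hdist : dist (x t) (x 0) ≤ y := by
    simpa using hx.dist_le_of_le ht (left_mem_Icc.2 zero_le_one) hunit
  calc dist (x t) 0 ≤ dist (x t) (x 0) + dist (x 0) 0 := dist_triangle ..
    _ ≤ y + y := add_le_add hdist (by simpa using hx0)
    _ = ↑(2 * y) := by push_cast; ring

theorem rpow_neg_le_integral_sq_of_holderOnWith {g : ℝ → ℝ} {y α : ℝ≥0} {p q : ℝ} (hα : 0 < α)
    (hg : HolderOnWith (y ^ p) α g (Icc 0 1)) (hy : 2 ≤ y)
    (hδ : (y : ℝ) ^ (-((p + q + 1) / α)) ≤ 1 / 2) {t : ℝ} (ht : t ∈ Icc (0 : ℝ) 1)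
    (hgt : (y : ℝ) ^ (-q) ≤ |g t|) :
    (y : ℝ) ^ (-((p + q + 1) / α + 2 * (q + 1))) ≤ ∫ u in (0 : ℝ)..1, g u ^ 2 := by
  have hα' : (α : ℝ) ≠ 0 := by exact_mod_cast hα.ne'
  have hy' : (2 : ℝ) ≤ y := by exact_mod_cast hy
  have hy0 : (0 : ℝ) < y := by linarith
  have hosc : ((y ^ p : ℝ≥0) : ℝ) * ((y : ℝ) ^ (-((p + q + 1) / α))) ^ (α : ℝ) =
      (y : ℝ) ^ (-(q + 1)) := by
    rw [NNReal.coe_rpow, ← Real.rpow_mul hy0.le, ← Real.rpow_add hy0]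
    congr 1
    field_simp
    ring
  have hheight : 2 * (y : ℝ) ^ (-(q + 1)) ≤ |g t| :=
    calc 2 * (y : ℝ) ^ (-(q + 1))
        ≤ y * (y : ℝ) ^ (-(q + 1)) := by gcongr
      _ = (y : ℝ) ^ (-q) := by
          rw [mul_comm, ← Real.rpow_add_one hy0.ne']
          congr 1
          ring
      _ ≤ |g t| := hgt
  calc (y : ℝ) ^ (-((p + q + 1) / α + 2 * (q + 1)))
      = (y : ℝ) ^ (-((p + q + 1) / α)) * ((y : ℝ) ^ (-(q + 1))) ^ 2 := by
        rw [← Real.rpow_mul_natCast hy0.le, ← Real.rpow_add hy0]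
        congr 1
        push_cast
        ring
    _ ≤ ∫ u in (0 : ℝ)..1, g u ^ 2 :=
        mul_sq_le_integral_sq_of_holderOnWith hα hg ht (by positivity) hδ (by positivity)
          hosc.le hheight

theorem exists_eventually_rpow_neg_le_integral_sq (hLip : PolynomiallyLipschitz f)
    (hflat : PolynomiallyNonflat f) {α : ℝ≥0} (hα : 0 < α) :
    ∃ E > (0 : ℝ), ∀ᶠ y : ℝ≥0 in atTop, ∀ x : ℝ → ℝ, HolderOnWith y α x (Icc 0 1) →
      |x 0| ≤ y → (∃ t ∈ Icc (0 : ℝ) 1, (y : ℝ)⁻¹ < |x t - x 0|) →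
      (y : ℝ) ^ (-E) ≤ ∫ u in (0 : ℝ)..1, f (x u) ^ 2 := by
  obtain ⟨p, hp, hLip⟩ := hLip.exists_eventually_lipschitzOnWith
  obtain ⟨q, hq, hflat⟩ := hflat.exists_eventually_rpow_neg_lt
  have hscale : 0 < (p + 1 + q + 1) / α := by positivity
  have hδ : ∀ᶠ y : ℝ in atTop, y ^ (-((p + 1 + q + 1) / α)) ≤ 1 / 2 :=
    (tendsto_rpow_neg_atTop hscale).eventually_le_const (by norm_num)
  have hcoe : Tendsto ((↑) : ℝ≥0 → ℝ) atTop atTop := NNReal.tendsto_coe_atTop.2 tendsto_id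
  refine ⟨(p + 1 + q + 1) / α + 2 * (q + 1), by positivity, ?_⟩
  filter_upwards [hLip, hcoe.eventually hflat, hcoe.eventually hδ, eventually_ge_atTop 2]
    with y hLip hflat hδ hy x hx hx0 ⟨t₁, ht₁, hmove⟩
  obtain ⟨t, ht, hft⟩ := hflat x 0 t₁
    ((hx.continuousOn hα).mono (Icc_subset_Icc_right ht₁.2)) ht₁.1 hmove
  have hfx : HolderOnWith (y ^ (p + 1)) α (f ∘ x) (Icc 0 1) := by
    rw [NNReal.rpow_add_one (zero_lt_two.trans_le hy).ne']
    simpa using hLip.holderOnWith.comp hx (mapsTo_closedBall_of_holderOnWith hx hx0)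
  exact rpow_neg_le_integral_sq_of_holderOnWith hα hfx hy hδ ⟨ht.1, ht.2.trans ht₁.2⟩ hft.le

end IntegralLowerBound

section IntegralGrowth

variable {φ : ℝ → ℝ}

theorem mul_le_integral_of_forall_le_integral_add_one {c : ℝ} {m n : ℕ} (hmn : m ≤ n)
    (hφ : ∀ k ∈ Ico m n, IntervalIntegrable φ volume k (k + 1))
    (hc : ∀ k ∈ Ico m n, c ≤ ∫ t in (k : ℝ)..(k + 1), φ t) :
    ((n : ℝ) - m) * c ≤ ∫ t in (m : ℝ)..n, φ t := by
  rw [← intervalIntegral.sum_integral_adjacent_intervals_Ico (a := ((↑) : ℕ → ℝ)) hmn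
    (by simpa using hφ)]
  push_cast
  refine le_trans (le_of_eq ?_)
    (Finset.card_nsmul_le_sum _ _ c fun k hk => hc k (by simpa using hk))
  rw [Nat.card_Ico, nsmul_eq_mul, Nat.cast_sub hmn]

theorem tendsto_rpow_mul_integral_atTop (hφ0 : ∀ t, 0 ≤ φ t)
    (hφ : ∀ a b : ℝ, 0 ≤ a → 0 ≤ b → IntervalIntegrable φ volume a b) {δ ε : ℝ} (hδ : 0 ≤ δ)
    (hδε : δ < ε) (h : ∀ᶠ j : ℕ in atTop, (j : ℝ) ^ (-δ) ≤ ∫ t in (j : ℝ)..(j + 1), φ t) :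
    Tendsto (fun T : ℝ => T ^ (ε - 1) * ∫ t in (0 : ℝ)..T, φ t) atTop atTop := by
  obtain ⟨N, hN⟩ := eventually_atTop.1 (h.and (eventually_gt_atTop 0))
  have hlim : Tendsto (fun T : ℝ => T ^ (ε - δ) * (⌊T⌋₊ / T - N / T)) atTop atTop := by
    refine (tendsto_rpow_atTop (sub_pos.2 hδε)).atTop_mul_pos one_pos ?_
    simpa using (tendsto_nat_floor_div_atTop (R := ℝ)).sub
      ((tendsto_const_nhds (x := (N : ℝ))).div_atTop tendsto_id)
  refine tendsto_atTop_mono' _ ?_ hlim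
  filter_upwards [eventually_ge_atTop (N : ℝ), eventually_gt_atTop 0] with T hNT hT
  have hfloor : (⌊T⌋₊ : ℝ) ≤ T := Nat.floor_le hT.le
  have hblock : ∀ k ∈ Ico N ⌊T⌋₊, T ^ (-δ) ≤ ∫ t in (k : ℝ)..(k + 1), φ t := by
    intro k hk
    obtain ⟨hle, hk0⟩ := hN k hk.1
    refine le_trans ?_ hle
    refine Real.rpow_le_rpow_of_nonpos (by exact_mod_cast hk0) ?_ (neg_nonpos.2 hδ)
    exact le_trans (by exact_mod_cast hk.2.le) hfloor
  calc T ^ (ε - δ) * (⌊T⌋₊ / T - N / T)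
      = T ^ (ε - 1) * ((⌊T⌋₊ - N) * T ^ (-δ)) := by
        rw [← sub_div, mul_div_assoc', mul_div_right_comm, ← Real.rpow_sub_one hT.ne',
          show ε - δ - 1 = ε - 1 + -δ by ring, Real.rpow_add hT]
        ring
    _ ≤ T ^ (ε - 1) * ∫ t in (N : ℝ)..⌊T⌋₊, φ t := by
        gcongr
        exact mul_le_integral_of_forall_le_integral_add_one (Nat.le_floor hNT)
          (fun k _ => hφ _ _ (by positivity) (by positivity)) hblock
    _ ≤ T ^ (ε - 1) * ∫ t in (0 : ℝ)..T, φ t := by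
        gcongr
        exact intervalIntegral.integral_mono_interval (by positivity)
          (by exact_mod_cast Nat.le_floor hNT) hfloor (.of_forall hφ0) (hφ _ _ le_rfl hT.le)

end IntegralGrowth

section AlmostSureEstimates

variable {Ω E : Type*} [MeasurableSpace Ω] {μ : Measure Ω} [NormedAddCommGroup E]

/-- Condition (A2)(i) for a single exponent: over time spans shorter than `1`, the process `X` is
Hölder continuous as a map into `L^r`, with exponent `ρ` and constant `B`. -/
def LpHolderWith (μ : Measure Ω) (X : ℝ → Ω → E) (r B ρ : ℝ) : Prop :=
  ∀ s t : ℝ, 0 ≤ s → s < t → t < s + 1 →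
    eLpNorm (fun ω => X t ω - X s ω) (ENNReal.ofReal r) μ ≤ ENNReal.ofReal (B * (t - s) ^ ρ)

/-- Condition (A2)(iii), the relaxed small ball estimate: the process `X` is unlikely to stay close
to its value at time `s` during all of `[s, s + Δ]`. -/
def SmallBallEstimate (μ : Measure Ω) (X : ℝ → Ω → ℝ) : Prop :=
  ∃ Δs > (0 : ℝ), ∃ γ > (0 : ℝ), ∃ lam > (0 : ℝ), ∃ μ₀ > (0 : ℝ),
    ∃ K₁ > (0 : ℝ), ∃ K₂ > (0 : ℝ), ∃ K₃ > (0 : ℝ),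
    ∀ s : ℝ, 0 ≤ s → ∀ Δ ∈ Ioo (0 : ℝ) Δs, ∀ η ∈ Ioo (0 : ℝ) (K₃ * Δ ^ γ),
      μ {ω | ∀ t ∈ Icc s (s + Δ), |X t ω - X s ω| ≤ η}
        ≤ ENNReal.ofReal (K₁ * Real.exp (-K₂ * η ^ (-lam) * Δ ^ μ₀))

theorem LpHolderWith.mono {X : ℝ → Ω → E} {r B B' ρ : ℝ} (h : LpHolderWith μ X r B ρ)
    (hB : B ≤ B') : LpHolderWith μ X r B' ρ := by
  intro s t hs hst ht
  refine (h s t hs hst ht).trans (ENNReal.ofReal_le_ofReal ?_)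
  have := sub_pos.2 hst
  gcongr

theorem ae_eventually_notMem_of_le_ofReal_summable {s : ℕ → Set Ω} {g : ℕ → ℝ} (hg : Summable g)
    (h : ∀ᶠ j in atTop, μ (s j) ≤ ENNReal.ofReal (g j)) : ∀ᵐ ω ∂μ, ∀ᶠ j in atTop, ω ∉ s j := by
  obtain ⟨N, hN⟩ := eventually_atTop.1 h
  have hsum : ∑' j, μ (s (j + N)) ≠ ⊤ :=
    ne_top_of_le_ne_top ((summable_nat_add_iff N).2 hg).tsum_ofReal_ne_top
      (ENNReal.tsum_le_tsum fun j => hN _ (Nat.le_add_left N j))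
  filter_upwards [ae_eventually_notMem hsum] with ω hω
  rwa [← map_add_atTop_eq_nat N, eventually_map]

theorem measure_lt_norm_le_of_eLpNorm_le {Y : Ω → E} (hY : AEStronglyMeasurable Y μ) {r A c : ℝ}
    (hr : 0 < r) (hA : 0 ≤ A) (hc : 0 < c)
    (h : eLpNorm Y (ENNReal.ofReal r) μ ≤ ENNReal.ofReal A) :
    μ {ω | c < ‖Y ω‖} ≤ ENNReal.ofReal ((A / c) ^ r) := by
  have hmarkov := meas_ge_le_mul_pow_eLpNorm_enorm μ (p := ENNReal.ofReal r) (by simpa using hr)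
    ENNReal.ofReal_ne_top hY (ε := ENNReal.ofReal c) (by simpa using hc) (by simp)
  rw [ENNReal.toReal_ofReal hr.le] at hmarkov
  calc μ {ω | c < ‖Y ω‖}
      ≤ μ {ω | ENNReal.ofReal c ≤ ‖Y ω‖ₑ} := by
        refine measure_mono fun ω (hω : c < ‖Y ω‖) => ?_
        simpa only [mem_ofPred_eq, ← ofReal_norm] using ENNReal.ofReal_le_ofReal hω.le
    _ ≤ (ENNReal.ofReal c)⁻¹ ^ r * eLpNorm Y (ENNReal.ofReal r) μ ^ r := hmarkov
    _ ≤ (ENNReal.ofReal c)⁻¹ ^ r * ENNReal.ofReal A ^ r := by gcongr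
    _ = ENNReal.ofReal ((A / c) ^ r) := by
        rw [← ENNReal.mul_rpow_of_nonneg _ _ hr.le, ← ENNReal.ofReal_inv_of_pos hc,
          ← ENNReal.ofReal_mul (by positivity), ← div_eq_inv_mul,
          ENNReal.ofReal_rpow_of_nonneg (by positivity) hr.le]

theorem div_rpow_rpow_le {A x b r p : ℝ} (hA : 0 ≤ A) (hx : 1 ≤ x) (hp : p ≤ b * r) :
    (A / x ^ b) ^ r ≤ A ^ r * x ^ (-p) := by
  have hx0 : 0 < x := by linarith
  rw [Real.div_rpow hA (by positivity), ← Real.rpow_mul hx0.le, div_eq_mul_inv,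
    ← Real.rpow_neg hx0.le]
  gcongr

theorem ae_eventually_norm_le_rpow {X : ℝ → Ω → E} (hX : ∀ t, 0 ≤ t → AEStronglyMeasurable (X t) μ)
    (hbdd : ∀ r > (1 : ℝ), ∃ B : ℝ, ∀ t : ℝ, 0 ≤ t →
      eLpNorm (X t) (ENNReal.ofReal r) μ ≤ ENNReal.ofReal B) {b : ℝ} (hb : 0 < b) :
    ∀ᵐ ω ∂μ, ∀ᶠ j : ℕ in atTop, ‖X j ω‖ ≤ (j : ℝ) ^ b := by
  have hr : 1 < 2 / b + 2 := by linarith [div_pos two_pos hb]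
  have hbr : 2 ≤ b * (2 / b + 2) := by
    rw [mul_add, mul_div_cancel₀ _ hb.ne']
    linarith
  obtain ⟨B, hB⟩ := hbdd _ hr
  have htail : ∀ᶠ j : ℕ in atTop, μ {ω | (j : ℝ) ^ b < ‖X j ω‖} ≤
      ENNReal.ofReal (|B| ^ (2 / b + 2) * (j : ℝ) ^ (-2 : ℝ)) := by
    filter_upwards [eventually_ge_atTop 1] with j hj
    have hj : (1 : ℝ) ≤ j := by exact_mod_cast hj
    exact (measure_lt_norm_le_of_eLpNorm_le (hX j (by positivity)) (by linarith) (abs_nonneg B)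
      (by positivity) ((hB j (by positivity)).trans
        (ENNReal.ofReal_le_ofReal (le_abs_self B)))).trans
      (ENNReal.ofReal_le_ofReal (div_rpow_rpow_le (abs_nonneg B) hj hbr))
  simpa only [mem_ofPred_eq, not_lt] using ae_eventually_notMem_of_le_ofReal_summable
    ((Real.summable_nat_rpow.2 (by norm_num)).mul_left _) htail

theorem LpHolderWith.measure_lt_norm_sub_le {X : ℝ → Ω → E} {r B ρ : ℝ}
    (h : LpHolderWith μ X r B ρ) (hX : ∀ t, 0 ≤ t → AEStronglyMeasurable (X t) μ) (hr : 0 < r)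
    (hB : 0 ≤ B) {c : ℝ} (hc : 0 < c) (α : ℝ) {s t : ℝ} (hs : 0 ≤ s) (hst : s < t)
    (ht : t < s + 1) :
    μ {ω | c * (t - s) ^ α < ‖X t ω - X s ω‖} ≤
      ENNReal.ofReal ((B / c) ^ r * (t - s) ^ ((ρ - α) * r)) := by
  have hd : 0 < t - s := sub_pos.2 hst
  have hratio : B * (t - s) ^ ρ / (c * (t - s) ^ α) = B / c * (t - s) ^ (ρ - α) := by
    rw [Real.rpow_sub hd, mul_div_mul_comm]
  have hmarkov := measure_lt_norm_le_of_eLpNorm_le ((hX t (hs.trans hst.le)).sub (hX s hs)) hr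
    (by positivity) (by positivity : 0 < c * (t - s) ^ α) (h s t hs hst ht)
  rwa [hratio, Real.mul_rpow (by positivity) (by positivity), ← Real.rpow_mul hd.le] at hmarkov

theorem LpHolderWith.measure_dyadic_increment_le {X : ℝ → Ω → E} {r B ρ α : ℝ}
    (h : LpHolderWith μ X r B ρ) (hX : ∀ t, 0 ≤ t → AEStronglyMeasurable (X t) μ) (hr : 0 < r)
    (hB : 0 ≤ B) (hαr : 2 ≤ (ρ - α) * r) {c : ℝ} (hc : 0 < c) {s : ℝ} (hs : 0 ≤ s) {m k : ℕ}
    (hk : k + 1 < 2 ^ m) :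
    μ {ω | c * ((1 / 2) ^ m : ℝ) ^ α <
        dist (X (s + k / 2 ^ m) ω) (X (s + (k + 1) / 2 ^ m) ω)} ≤
      ENNReal.ofReal ((B / c) ^ r * ((1 / 2) ^ m) ^ 2) := by
  have hm : m ≠ 0 := by
    rintro rfl
    simp at hk
  have hmesh : s + (k + 1) / 2 ^ m - (s + k / 2 ^ m) = (1 / 2 : ℝ) ^ m := by
    rw [div_pow, one_pow]
    ring
  have hmesh0 : (0 : ℝ) < (1 / 2) ^ m := by positivity
  have hmesh1 : (1 / 2 : ℝ) ^ m < 1 := pow_lt_one₀ (by norm_num) (by norm_num) hm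
  have hincr := h.measure_lt_norm_sub_le hX hr hB hc α (s := s + k / 2 ^ m)
    (t := s + (k + 1) / 2 ^ m) (by positivity) (by linarith) (by linarith)
  rw [hmesh] at hincr
  simp only [dist_eq_norm']
  refine hincr.trans (ENNReal.ofReal_le_ofReal ?_)
  gcongr
  rw [← Real.rpow_two]
  exact Real.rpow_le_rpow_of_exponent_ge hmesh0 hmesh1.le hαr

theorem LpHolderWith.measure_not_dyadicHolder_le {X : ℝ → Ω → E} {r B ρ α : ℝ}
    (h : LpHolderWith μ X r B ρ) (hX : ∀ t, 0 ≤ t → AEStronglyMeasurable (X t) μ) (hr : 0 < r)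
    (hB : 0 ≤ B) (hαr : 2 ≤ (ρ - α) * r) {c : ℝ} (hc : 0 < c) {s : ℝ} (hs : 0 ≤ s) :
    μ {ω | ¬ DyadicHolder (fun u => X (s + u) ω) α c} ≤ ENNReal.ofReal (2 * (B / c) ^ r) := by
  set bad : ℕ → ℕ → Set Ω := fun m k => {ω | c * ((1 / 2) ^ m : ℝ) ^ α <
    dist (X (s + k / 2 ^ m) ω) (X (s + (k + 1) / 2 ^ m) ω)}
  have hcover : {ω | ¬ DyadicHolder (fun u => X (s + u) ω) α c} ⊆
      ⋃ m, ⋃ k ∈ Finset.range (2 ^ m - 1), bad m k := by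
    intro ω hω
    simp only [mem_ofPred_eq, DyadicHolder, not_forall, not_le] at hω
    obtain ⟨m, k, hk, hlt⟩ := hω
    exact mem_iUnion.2 ⟨m, mem_biUnion (Finset.mem_range.2 (by omega : k < 2 ^ m - 1)) hlt⟩
  have hlevel (m : ℕ) : μ (⋃ k ∈ Finset.range (2 ^ m - 1), bad m k) ≤
      ENNReal.ofReal ((B / c) ^ r * (1 / 2) ^ m) := by
    calc μ (⋃ k ∈ Finset.range (2 ^ m - 1), bad m k)
        ≤ ∑ k ∈ Finset.range (2 ^ m - 1), μ (bad m k) := measure_biUnion_finset_le _ _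
      _ ≤ (2 ^ m - 1 : ℕ) • ENNReal.ofReal ((B / c) ^ r * ((1 / 2) ^ m) ^ 2) := by
          refine (Finset.sum_le_card_nsmul _ _ _ fun k hk => ?_).trans_eq
            (by rw [Finset.card_range])
          have := Finset.mem_range.1 hk
          exact h.measure_dyadic_increment_le hX hr hB hαr hc hs (by omega)
      _ ≤ (2 ^ m : ℕ) • ENNReal.ofReal ((B / c) ^ r * ((1 / 2) ^ m) ^ 2) := by
          gcongr
          exact Nat.sub_le _ _
      _ = ENNReal.ofReal ((B / c) ^ r * (1 / 2) ^ m) := by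
          rw [← ENNReal.ofReal_nsmul]
          congr 1
          rw [nsmul_eq_mul, div_pow, one_pow]
          push_cast
          field_simp
  calc μ {ω | ¬ DyadicHolder (fun u => X (s + u) ω) α c}
      ≤ ∑' m, μ (⋃ k ∈ Finset.range (2 ^ m - 1), bad m k) :=
        (measure_mono hcover).trans (measure_iUnion_le _)
    _ ≤ ∑' m : ℕ, ENNReal.ofReal ((B / c) ^ r * (1 / 2) ^ m) := ENNReal.tsum_le_tsum hlevel
    _ = ENNReal.ofReal (2 * (B / c) ^ r) := by
        rw [← ENNReal.ofReal_tsum_of_nonneg (fun m => by positivity)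
          (summable_geometric_two.mul_left _), tsum_mul_left, tsum_geometric_two, mul_comm]

theorem ae_eventually_holderOnWith {X : ℝ → Ω → E}
    (hX : ∀ t, 0 ≤ t → AEStronglyMeasurable (X t) μ)
    (hcont : ∀ᵐ ω ∂μ, ContinuousOn (fun t => X t ω) (Ici 0)) {ρ : ℝ}
    (hLp : ∀ r > (1 : ℝ), ∃ B : ℝ, LpHolderWith μ X r B ρ) {α : ℝ≥0} (hα : 0 < α) (hαρ : α < ρ)
    {b : ℝ} (hb : 0 < b) :
    ∀ᵐ ω ∂μ, ∀ᶠ j : ℕ in atTop,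
      HolderOnWith ((j : ℝ≥0) ^ b) α (fun u => X (j + u) ω) (Icc 0 1) := by
  have hκ : 0 < chainingConst α := chainingConst_pos (by exact_mod_cast hα)
  have hgap : 0 < ρ - α := sub_pos.2 hαρ
  obtain ⟨r, hr, hbr, hαr⟩ : ∃ r > 1, 2 ≤ b * r ∧ 2 ≤ (ρ - α) * r :=
    ((eventually_gt_atTop 1).and (((tendsto_id.const_mul_atTop hb).eventually_ge_atTop 2).and
      ((tendsto_id.const_mul_atTop hgap).eventually_ge_atTop 2))).exists
  obtain ⟨B, hB⟩ := hLp r hr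
  have htail : ∀ᶠ j : ℕ in atTop,
      μ {ω | ¬ DyadicHolder (fun u => X (j + u) ω) α ((j : ℝ) ^ b / chainingConst α)} ≤
        ENNReal.ofReal (2 * (|B| * chainingConst α) ^ r * (j : ℝ) ^ (-2 : ℝ)) := by
    filter_upwards [eventually_ge_atTop 1] with j hj
    have hj : (1 : ℝ) ≤ j := by exact_mod_cast hj
    refine ((hB.mono (le_abs_self B)).measure_not_dyadicHolder_le hX (by linarith) (abs_nonneg B)
      hαr (by positivity) (by positivity)).trans (ENNReal.ofReal_le_ofReal ?_)
    rw [div_div_eq_mul_div, mul_assoc]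
    gcongr
    exact div_rpow_rpow_le (by positivity) hj hbr
  filter_upwards [hcont, ae_eventually_notMem_of_le_ofReal_summable
    ((Real.summable_nat_rpow.2 (by norm_num)).mul_left _) htail] with ω hcontω hω
  filter_upwards [hω] with j hj
  refine DyadicHolder.holderOnWith (by simpa using hj) hα ?_
  exact hcontω.comp (by fun_prop) fun u hu => add_nonneg j.cast_nonneg hu.1

theorem summable_exp_neg_mul_natCast_rpow {c s : ℝ} (hc : 0 < c) (hs : 0 < s) :
    Summable fun j : ℕ => Real.exp (-c * (j : ℝ) ^ s) := by
  have hlim : Tendsto (fun j : ℕ => (j : ℝ) ^ s) atTop atTop :=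
    (tendsto_rpow_atTop hs).comp tendsto_natCast_atTop_atTop
  refine summable_of_isBigO_nat (Real.summable_nat_rpow.2 (by norm_num : (-2 : ℝ) < -1)) ?_
  refine ((isLittleO_exp_neg_mul_rpow_atTop hc (-2 / s)).isBigO.comp_tendsto hlim).congr'
    .rfl (.of_forall fun j => ?_)
  rw [Function.comp_apply, ← Real.rpow_mul j.cast_nonneg, mul_div_cancel₀ _ hs.ne']

theorem SmallBallEstimate.ae_eventually_exists_lt {X : ℝ → Ω → ℝ} (h : SmallBallEstimate μ X)
    {b : ℝ} (hb : 0 < b) :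
    ∀ᵐ ω ∂μ, ∀ᶠ j : ℕ in atTop,
      ∃ u ∈ Icc (0 : ℝ) 1, ((j : ℝ) ^ b)⁻¹ < |X (j + u) ω - X j ω| := by
  obtain ⟨Δs, hΔs, γ, -, lam, hlam, μ₀, -, K₁, -, K₂, hK₂, K₃, hK₃, h⟩ := h
  obtain ⟨Δ, hΔ0, hΔ⟩ := exists_between (lt_min hΔs one_pos)
  obtain ⟨hΔs, hΔ1⟩ := lt_min_iff.1 hΔ
  have hinv : Tendsto (fun j : ℕ => ((j : ℝ) ^ b)⁻¹) atTop (𝓝 0) :=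
    ((tendsto_rpow_atTop hb).comp tendsto_natCast_atTop_atTop).inv_tendsto_atTop
  have htail : ∀ᶠ j : ℕ in atTop,
      μ {ω | ∀ t ∈ Icc (j : ℝ) (j + Δ), |X t ω - X j ω| ≤ ((j : ℝ) ^ b)⁻¹} ≤
        ENNReal.ofReal (K₁ * Real.exp (-(K₂ * Δ ^ μ₀) * (j : ℝ) ^ (b * lam))) := by
    filter_upwards [hinv.eventually_lt_const (by positivity : 0 < K₃ * Δ ^ γ),
      eventually_gt_atTop 0] with j hj hj0
    have hpow : (((j : ℝ) ^ b)⁻¹) ^ (-lam) = (j : ℝ) ^ (b * lam) := by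
      rw [Real.inv_rpow (by positivity), Real.rpow_neg (by positivity), inv_inv,
        Real.rpow_mul (by positivity)]
    convert h j (by positivity) Δ ⟨hΔ0, hΔs⟩ _ ⟨by positivity, hj⟩ using 4
    rw [hpow]
    ring
  filter_upwards [ae_eventually_notMem_of_le_ofReal_summable
    ((summable_exp_neg_mul_natCast_rpow (by positivity) (by positivity)).mul_left K₁) htail]
    with ω hω
  filter_upwards [hω] with j hj
  simp only [not_forall, not_le] at hj
  obtain ⟨t, ht, hlt⟩ := hj
  exact ⟨t - j, ⟨by linarith [ht.1], by linarith [ht.2]⟩, by rwa [add_sub_cancel]⟩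

end AlmostSureEstimates

theorem ae_eventually_rpow_neg_le_integral_sq {Ω : Type*} [MeasurableSpace Ω] {μ : Measure Ω}
    {X : ℝ → Ω → ℝ} {f : ℝ → ℝ} (hX : ∀ t, 0 ≤ t → AEStronglyMeasurable (X t) μ)
    (hcont : ∀ᵐ ω ∂μ, ContinuousOn (fun t => X t ω) (Ici 0)) (hflat : PolynomiallyNonflat f)
    (hLip : PolynomiallyLipschitz f)
    (hHolder : ∃ ρ > (0 : ℝ), ∀ r > (1 : ℝ), ∃ B : ℝ, LpHolderWith μ X r B ρ)
    (hbdd : ∀ r > (1 : ℝ), ∃ B : ℝ, ∀ t : ℝ, 0 ≤ t →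
      eLpNorm (X t) (ENNReal.ofReal r) μ ≤ ENNReal.ofReal B)
    (hball : SmallBallEstimate μ X) {δ : ℝ} (hδ : 0 < δ) :
    ∀ᵐ ω ∂μ, ∀ᶠ j : ℕ in atTop,
      (j : ℝ) ^ (-δ) ≤ ∫ t in (j : ℝ)..(j + 1), f (X t ω) ^ 2 := by
  obtain ⟨ρ, hρ, hHolder⟩ := hHolder
  obtain ⟨α, hα, hαρ⟩ : ∃ α : ℝ≥0, 0 < α ∧ α < ρ := by
    lift ρ to ℝ≥0 using hρ.le
    exact_mod_cast exists_between (by exact_mod_cast hρ : 0 < ρ)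
  obtain ⟨E, hE, hpath⟩ := exists_eventually_rpow_neg_le_integral_sq hLip hflat hα
  have hb : 0 < δ / E := by positivity
  have hlim : Tendsto (fun j : ℕ => (j : ℝ≥0) ^ (δ / E)) atTop atTop :=
    (NNReal.tendsto_rpow_atTop hb).comp tendsto_natCast_atTop_atTop
  filter_upwards [ae_eventually_holderOnWith hX hcont hHolder hα hαρ hb,
    ae_eventually_norm_le_rpow hX hbdd hb, hball.ae_eventually_exists_lt hb]
    with ω hHolderω hbddω hballω
  filter_upwards [hlim.eventually hpath, hHolderω, hbddω, hballω] with j hpath hH hN hS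
  have hint := hpath _ hH (by simpa using hN) (by simpa using hS)
  rw [intervalIntegral.integral_comp_add_left (fun t => f (X t ω) ^ 2), add_zero, NNReal.coe_rpow,
    NNReal.coe_natCast, ← Real.rpow_mul j.cast_nonneg] at hint
  rwa [mul_neg, div_mul_cancel₀ _ hE.ne'] at hint

theorem stmt_3_general {Ω : Type*} [MeasurableSpace Ω] {μ : Measure Ω} {X : ℝ → Ω → ℝ} {f : ℝ → ℝ}
    (hX : ∀ t, 0 ≤ t → AEStronglyMeasurable (X t) μ)
    (hcont : ∀ᵐ ω ∂μ, ContinuousOn (fun t => X t ω) (Ici 0)) (hflat : PolynomiallyNonflat f)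
    (hLip : PolynomiallyLipschitz f)
    (hHolder : ∃ ρ > (0 : ℝ), ∀ r > (1 : ℝ), ∃ B : ℝ, LpHolderWith μ X r B ρ)
    (hbdd : ∀ r > (1 : ℝ), ∃ B : ℝ, ∀ t : ℝ, 0 ≤ t →
      eLpNorm (X t) (ENNReal.ofReal r) μ ≤ ENNReal.ofReal B)
    (hball : SmallBallEstimate μ X) {ε : ℝ} (hε : 0 < ε) :
    ∀ᵐ ω ∂μ, Tendsto (fun T : ℝ => T ^ (ε - 1) * ∫ t in Ioc (0 : ℝ) T, f (X t ω) ^ 2)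
      atTop atTop := by
  filter_upwards [hcont, ae_eventually_rpow_neg_le_integral_sq hX hcont hflat hLip hHolder hbdd
    hball (half_pos hε)] with ω hcontω hω
  have hint : ∀ a b : ℝ, 0 ≤ a → 0 ≤ b →
      IntervalIntegrable (fun t => f (X t ω) ^ 2) volume a b := fun a b ha hb =>
    (((hLip.continuous.comp_continuousOn hcontω).pow 2).mono
      fun t ht => (le_min ha hb).trans ht.1).intervalIntegrable
  refine (tendsto_rpow_mul_integral_atTop (fun t => sq_nonneg _) hint (half_pos hε).le
    (half_lt_self hε) hω).congr' ?_
  filter_upwards [eventually_ge_atTop 0] with T hT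
  rw [intervalIntegral.integral_of_le hT]

/-- under (A1)(i)-(ii) on `f` and (A2)(i)-(iii) on the a.s. continuous,
jointly measurable process `X` (Hölder continuity in `L^{∞-}`, boundedness in `L^{∞-}`,
and the relaxed small ball estimate), for every `ε > 0`, almost surely
`T^{ε-1} ∫₀^T f(X_t)² dt → ∞` as `T → ∞`. -/
theorem stmt_3
    {Ω : Type*} [MeasurableSpace Ω] (P : Measure Ω) [IsProbabilityMeasure P]
    (X : ℝ → Ω → ℝ) (f : ℝ → ℝ)
    (hXmeas : Measurable (Function.uncurry X))
    (hXcont : ∀ᵐ ω ∂P, ContinuousOn (fun t => X t ω) (Ici 0))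
    -- (A1)(i)
    (hA1i : ∃ K > (0:ℝ), ∃ ηs > (0:ℝ), ∀ η ∈ Ioo (0:ℝ) ηs, ∀ x : ℝ,
      (((η ^ K : ℝ) : EReal) ≤ ⨆ y ∈ Ico x (x + η), ((|f y| : ℝ) : EReal)) ∧
      (((η ^ K : ℝ) : EReal) ≤ ⨆ y ∈ Ioc (x - η) x, ((|f y| : ℝ) : EReal)))
    -- (A1)(ii)
    (hfC1 : ContDiff ℝ 1 f)
    (hA1ii : ∃ C₀ > (0:ℝ), ∀ x : ℝ, |deriv f x| ≤ C₀ * (1 + |x|) ^ C₀)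
    -- (A2)(i): Hölder continuity in L^{∞-}
    (hA2i : ∃ ρ > (0:ℝ), ∀ r > (1:ℝ), ∃ B : ℝ, ∀ s t : ℝ, 0 ≤ s → s < t → t < s + 1 →
      eLpNorm (fun ω => X t ω - X s ω) (ENNReal.ofReal r) P
        ≤ ENNReal.ofReal (B * (t - s) ^ ρ))
    -- (A2)(ii): boundedness in L^{∞-}
    (hA2ii : ∀ r > (1:ℝ), ∃ B : ℝ, ∀ t : ℝ, 0 ≤ t →
      eLpNorm (X t) (ENNReal.ofReal r) P ≤ ENNReal.ofReal B)
    -- (A2)(iii): relaxed small ball estimate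
    (hA2iii : ∃ Δs > (0:ℝ), ∃ γ > (0:ℝ), ∃ lam > (0:ℝ), ∃ μ₀ > (0:ℝ),
      ∃ K₁ > (0:ℝ), ∃ K₂ > (0:ℝ), ∃ K₃ > (0:ℝ),
      ∀ s : ℝ, 0 ≤ s → ∀ Δ ∈ Ioo (0:ℝ) Δs, ∀ η ∈ Ioo (0:ℝ) (K₃ * Δ ^ γ),
        P {ω | ∀ t ∈ Icc s (s + Δ), |X t ω - X s ω| ≤ η}
          ≤ ENNReal.ofReal (K₁ * Real.exp (-K₂ * η ^ (-lam) * Δ ^ μ₀))) :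
    ∀ ε > (0:ℝ), ∀ᵐ ω ∂P,
      Tendsto (fun T : ℝ => T ^ (ε - 1) * ∫ t in Ioc (0:ℝ) T, (f (X t ω)) ^ 2)
        atTop atTop := by
  intro ε hε
  obtain ⟨C₀, hC₀, hderiv⟩ := hA1ii
  exact stmt_3_general
    (fun t _ => (hXmeas.comp measurable_prodMk_left).aestronglyMeasurable) hXcont hA1i
    (.of_abs_deriv_le (hfC1.differentiable one_ne_zero) hC₀.le hC₀.le hderiv) hA2i hA2ii hA2iii hε
end

section
/- Let (Ω, F, P) be a probability space, p > 1, H ∈ (0,1), and let X : [0,∞) × Ω → ℝ be a jointly measurable stochastic process such that ∫₀^T |X_t|^p dt is well defined and finite almost surely for every T > 0. Assume X is self-similar with index H, i.e. for every c > 0, every n ∈ ℕ and all t₁, …, t_n ≥ 0, the random vector (X_{c t₁}, …, X_{c t_n}) has the same distribution as (c^H X_{t₁}, …, c^H X_{t_n}); and assume there exist a constant C > 0 and a nonnegative random variable ξ with P[ξ ≤ y] ≤ C y for all y ≥ 0 such that ∫₀^1 |X_t|^p dt ≥ ξ^p almost surely. Then for every ε ∈ (0, pH), every T ≥ 1 and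 every x > 0, P[ ∫₀^T |X_t|^p dt < x · T^{1+ε} ] ≤ C · x^{1/p} · T^{−(H − ε/p)}. -/
open Set Filter MeasureTheory

/-!
Sample the time interval at independent uniform points `u₀, u₁, …`, independent of the process.
By the strong law of large numbers the averages `n⁻¹ ∑ i < n, Y (u i)` converge almost surely to
`∫ Y`, and for fixed sampling points the law of such an average depends only on the
finite-dimensional distributions of `Y`. Hence so does the law of `∫ Y`, and self-similarity of `X`
with index `H` yields the scaling law `∫₀ᵀ |X|ᵖ ∼ T ^ (1 + pH) ∫₀¹ |X|ᵖ`, which reduces the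
estimate to the given one on `[0, 1]`.
-/

section
open ProbabilityTheory
open scoped Topology

variable {Ω Ω' : Type*} [MeasurableSpace Ω] [MeasurableSpace Ω'] {P : Measure Ω} {Q : Measure Ω'}

section IdentDistrib

lemma identDistrib_comp_measurePreserving {E : Type*} [MeasurableSpace E] {φ : Ω → Ω'}
    (hφ : MeasurePreserving φ P Q) {f : Ω' → E} (hf : Measurable f) :
    IdentDistrib (f ∘ φ) f P Q where
  aemeasurable_fst := (hf.comp hφ.measurable).aemeasurable
  aemeasurable_snd := hf.aemeasurable
  map_eq := by rw [← Measure.map_map hf hφ.measurable, hφ.map_eq]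

lemma identDistrib_prod_of_ae {S E : Type*} [MeasurableSpace S] [MeasurableSpace E]
    {ν : Measure S} [SFinite P] [SFinite Q] [SFinite ν] {F : Ω × S → E} {G : Ω' × S → E}
    (hF : Measurable F) (hG : Measurable G)
    (hFG : ∀ᵐ s ∂ν, IdentDistrib (fun ω => F (ω, s)) (fun ω => G (ω, s)) P Q) :
    IdentDistrib F G (P.prod ν) (Q.prod ν) where
  aemeasurable_fst := hF.aemeasurable
  aemeasurable_snd := hG.aemeasurable
  map_eq := by
    ext B hB
    rw [Measure.map_apply hF hB, Measure.map_apply hG hB, Measure.prod_apply_symm (hF hB),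
      Measure.prod_apply_symm (hG hB)]
    refine lintegral_congr_ae ?_
    filter_upwards [hFG] with s hs using hs.measure_mem_eq hB

lemma identDistrib_of_tendsto_ae {E : Type*} [PseudoEMetricSpace E] [SecondCountableTopology E]
    [MeasurableSpace E] [BorelSpace E] [IsProbabilityMeasure P] [IsProbabilityMeasure Q]
    {F : ℕ → Ω → E} {G : ℕ → Ω' → E} {f : Ω → E} {g : Ω' → E}
    (hFG : ∀ n, IdentDistrib (F n) (G n) P Q)
    (hF : ∀ᵐ ω ∂P, Tendsto (fun n => F n ω) atTop (𝓝 (f ω)))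
    (hG : ∀ᵐ ω ∂Q, Tendsto (fun n => G n ω) atTop (𝓝 (g ω))) :
    IdentDistrib f g P Q := by
  have hF_law : TendstoInDistribution F atTop f (fun _ => P) P :=
    (tendstoInMeasure_of_tendsto_ae
      (fun n => (hFG n).aemeasurable_fst.aestronglyMeasurable) hF).tendstoInDistribution
      fun n => (hFG n).aemeasurable_fst
  have hG_law : TendstoInDistribution G atTop g (fun _ => Q) Q :=
    (tendstoInMeasure_of_tendsto_ae
      (fun n => (hFG n).aemeasurable_snd.aestronglyMeasurable) hG).tendstoInDistribution
      fun n => (hFG n).aemeasurable_snd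
  have hlim := tendsto_nhds_unique hF_law.tendsto
    (hG_law.tendsto.congr fun n => Subtype.ext (hFG n).map_eq.symm)
  exact ⟨hF_law.aemeasurable_limit, hG_law.aemeasurable_limit, Subtype.ext_iff.1 hlim⟩

end IdentDistrib

section SampleMean

variable {τ E : Type*} [MeasurableSpace τ] {μ : Measure τ} [NormedAddCommGroup E] [NormedSpace ℝ E]

/-- The average of the process `Y` over the first `n` of a sequence of sampling times, as a
function of the outcome and the sampling times jointly. It is the Monte Carlo approximation of the
time integral of `Y`. -/
noncomputable def sampleMean (Y : τ → Ω → E) (n : ℕ) (q : Ω × (ℕ → τ)) : E :=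
  (n : ℝ)⁻¹ • ∑ i ∈ Finset.range n, Y (q.2 i) q.1

variable [MeasurableSpace E] [BorelSpace E]

lemma ae_infinitePi_tendsto_mean [CompleteSpace E] [IsProbabilityMeasure μ] {f : τ → E}
    (hf : Measurable f) (hfi : Integrable f μ) :
    ∀ᵐ u ∂Measure.infinitePi (fun _ : ℕ => μ),
      Tendsto (fun n : ℕ => (n : ℝ)⁻¹ • ∑ i ∈ Finset.range n, f (u i)) atTop
        (𝓝 (∫ t, f t ∂μ)) := by
  have hident (i : ℕ) : IdentDistrib (fun u : ℕ → τ => f (u i)) f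
      (Measure.infinitePi fun _ => μ) μ :=
    identDistrib_comp_measurePreserving (measurePreserving_eval_infinitePi _ i) hf
  have hindep := iIndepFun_infinitePi (P := fun _ : ℕ => μ) (X := fun _ => f) fun _ => hf
  rw [← (hident 0).integral_eq]
  exact strong_law_ae (μ := Measure.infinitePi fun _ : ℕ => μ) (fun i u => f (u i))
    ((hident 0).integrable_iff.2 hfi)
    (fun _ _ hij => hindep.indepFun hij) fun i => (hident i).trans (hident 0).symm

variable [SecondCountableTopology E]

lemma measurable_sampleMean {Y : τ → Ω → E} (hY : Measurable (Function.uncurry Y)) (n : ℕ) :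
    Measurable (sampleMean Y n) :=
  (Finset.measurable_sum _ fun i _ =>
    hY.comp (((measurable_pi_apply i).comp measurable_snd).prodMk measurable_fst)).const_smul _

lemma ae_tendsto_sampleMean [CompleteSpace E] [IsProbabilityMeasure μ]
    {Y : τ → Ω → E} (hY : Measurable (Function.uncurry Y))
    (hYi : ∀ᵐ ω ∂P, Integrable (fun t => Y t ω) μ) :
    ∀ᵐ q ∂P.prod (Measure.infinitePi fun _ : ℕ => μ),
      Tendsto (fun n => sampleMean Y n q) atTop (𝓝 (∫ t, Y t q.1 ∂μ)) := by
  have hint : Measurable fun ω => ∫ t, Y t ω ∂μ :=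
    hY.stronglyMeasurable.integral_prod_left'.measurable
  have hmeas := measurableSet_tendsto_fun (l := atTop) (measurable_sampleMean hY)
    (hint.comp measurable_fst)
  refine (Measure.ae_prod_iff_ae_ae hmeas).2 ?_
  filter_upwards [hYi] with ω hω
  exact ae_infinitePi_tendsto_mean (f := (Y · ω)) hY.of_uncurry_right hω

lemma identDistrib_sampleMean [SFinite P] [SFinite Q] [IsProbabilityMeasure μ]
    {Y : τ → Ω → E} {Z : τ → Ω' → E} {S : Set τ} (hS : ∀ᵐ t ∂μ, t ∈ S)
    (hY : Measurable (Function.uncurry Y)) (hZ : Measurable (Function.uncurry Z))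
    (hYZ : ∀ (n : ℕ) (t : Fin n → τ), (∀ i, t i ∈ S) →
      IdentDistrib (fun ω i => Y (t i) ω) (fun ω i => Z (t i) ω) P Q) (n : ℕ) :
    IdentDistrib (sampleMean Y n) (sampleMean Z n) (P.prod (Measure.infinitePi fun _ : ℕ => μ))
      (Q.prod (Measure.infinitePi fun _ : ℕ => μ)) := by
  have hsample : ∀ᵐ u ∂Measure.infinitePi (fun _ : ℕ => μ), ∀ i, u i ∈ S :=
    ae_all_iff.2 fun i =>
      (measurePreserving_eval_infinitePi (fun _ : ℕ => μ) i).quasiMeasurePreserving.ae hS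
  refine identDistrib_prod_of_ae (measurable_sampleMean hY n) (measurable_sampleMean hZ n) ?_
  filter_upwards [hsample] with u hu
  have hmean : Measurable fun v : Fin n → E => (n : ℝ)⁻¹ • ∑ i, v i := by fun_prop
  simpa only [sampleMean, Finset.sum_range, Function.comp_def] using
    (hYZ n (fun i => u i) fun i => hu i).comp hmean

theorem identDistrib_integral_of_finite_dim [CompleteSpace E] [IsProbabilityMeasure P]
    [IsProbabilityMeasure Q] [IsProbabilityMeasure μ] {Y : τ → Ω → E} {Z : τ → Ω' → E} {S : Set τ}
    (hS : ∀ᵐ t ∂μ, t ∈ S)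
    (hY : Measurable (Function.uncurry Y)) (hZ : Measurable (Function.uncurry Z))
    (hYi : ∀ᵐ ω ∂P, Integrable (fun t => Y t ω) μ) (hZi : ∀ᵐ ω ∂Q, Integrable (fun t => Z t ω) μ)
    (hYZ : ∀ (n : ℕ) (t : Fin n → τ), (∀ i, t i ∈ S) →
      IdentDistrib (fun ω i => Y (t i) ω) (fun ω i => Z (t i) ω) P Q) :
    IdentDistrib (fun ω => ∫ t, Y t ω ∂μ) (fun ω => ∫ t, Z t ω ∂μ) P Q := by
  have hprod := identDistrib_of_tendsto_ae (identDistrib_sampleMean hS hY hZ hYZ)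
    (ae_tendsto_sampleMean hY hYi) (ae_tendsto_sampleMean hZ hZi)
  have hintY : Measurable fun ω => ∫ t, Y t ω ∂μ :=
    hY.stronglyMeasurable.integral_prod_left'.measurable
  have hintZ : Measurable fun ω => ∫ t, Z t ω ∂μ :=
    hZ.stronglyMeasurable.integral_prod_left'.measurable
  exact (identDistrib_comp_measurePreserving measurePreserving_fst hintY).symm.trans
    (hprod.trans (identDistrib_comp_measurePreserving measurePreserving_fst hintZ))

end SampleMean

section MulLeft

variable {E : Type*} [NormedAddCommGroup E] {f : ℝ → E} {a : ℝ}

lemma integrableOn_Ioc_comp_mul_left (ha : 0 < a) (hf : IntegrableOn f (Ioc 0 a)) :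
    IntegrableOn (fun t => f (a * t)) (Ioc 0 1) := by
  rw [← intervalIntegrable_iff_integrableOn_Ioc_of_le ha.le] at hf
  rw [← intervalIntegrable_iff_integrableOn_Ioc_of_le zero_le_one]
  simpa only [zero_div, div_self ha.ne'] using hf.comp_mul_left (c := a)

lemma setIntegral_Ioc_eq_smul_comp_mul_left [NormedSpace ℝ E] (f : ℝ → E) (ha : 0 < a) :
    ∫ t in Ioc 0 a, f t = a • ∫ t in Ioc 0 1, f (a * t) := by
  rw [← intervalIntegral.integral_of_le ha.le, ← intervalIntegral.integral_of_le zero_le_one,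
    intervalIntegral.smul_integral_comp_mul_left, mul_zero, mul_one]

end MulLeft

section SelfSimilar

variable {E : Type*} [NormedAddCommGroup E] [NormedSpace ℝ E] [MeasurableSpace E]

/-- The process `X`, considered at nonnegative times only, is self-similar with index `H`: the
finite-dimensional distributions of `t ↦ X (c * t)` and of `t ↦ c ^ H • X t` agree for all `c > 0`.
They are encoded by finite families of times, in which repetitions are allowed. -/
def IsSelfSimilar (P : Measure Ω) (X : ℝ → Ω → E) (H : ℝ) : Prop :=
  ∀ c > (0 : ℝ), ∀ n : ℕ, ∀ t : Fin n → ℝ, (∀ i, 0 ≤ t i) →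
    Measure.map (fun ω i => X (c * t i) ω) P = Measure.map (fun ω i => c ^ H • X (t i) ω) P

namespace IsSelfSimilar

variable [BorelSpace E] {X : ℝ → Ω → E} {H : ℝ}

lemma identDistrib (hX : IsSelfSimilar P X H) (hXm : ∀ t, Measurable (X t)) {c : ℝ} (hc : 0 < c)
    {n : ℕ} {t : Fin n → ℝ} (ht : ∀ i, 0 ≤ t i) :
    IdentDistrib (fun ω i => X (c * t i) ω) (fun ω i => c ^ H • X (t i) ω) P P where
  aemeasurable_fst := by fun_prop
  aemeasurable_snd := by fun_prop
  map_eq := hX c hc n t ht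

lemma norm_rpow (hX : IsSelfSimilar P X H) (hXm : ∀ t, Measurable (X t)) (p : ℝ) :
    IsSelfSimilar P (fun t ω => ‖X t ω‖ ^ p) (p * H) := by
  intro c hc n t ht
  have hscale (v : E) : ‖c ^ H • v‖ ^ p = c ^ (p * H) • ‖v‖ ^ p := by
    rw [norm_smul, Real.norm_of_nonneg (Real.rpow_nonneg hc.le H),
      Real.mul_rpow (Real.rpow_nonneg hc.le H) (norm_nonneg v), ← Real.rpow_mul hc.le, mul_comm H,
      smul_eq_mul]
  have hnorm : Measurable fun (v : Fin n → E) i => ‖v i‖ ^ p := by fun_prop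
  simpa only [Function.comp_def, hscale] using ((hX.identDistrib hXm hc ht).comp hnorm).map_eq

theorem identDistrib_integral_Ioc [SecondCountableTopology E] [CompleteSpace E]
    [IsProbabilityMeasure P] (hX : IsSelfSimilar P X H) (hXm : Measurable (Function.uncurry X))
    (hXi : ∀ᵐ ω ∂P, ∀ T > (0 : ℝ), IntegrableOn (fun t => X t ω) (Ioc 0 T))
    {T : ℝ} (hT : 0 < T) :
    IdentDistrib (fun ω => ∫ t in Ioc 0 T, X t ω)
      (fun ω => T ^ (1 + H) • ∫ t in Ioc (0 : ℝ) 1, X t ω) P P := by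
  have : IsProbabilityMeasure (volume.restrict (Ioc (0 : ℝ) 1)) := ⟨by simp⟩
  have hunit : IdentDistrib (fun ω => ∫ t in Ioc (0 : ℝ) 1, X (T * t) ω)
      (fun ω => ∫ t in Ioc (0 : ℝ) 1, T ^ H • X t ω) P P := by
    refine identDistrib_integral_of_finite_dim (S := Ici 0) ?_ ?_ (hXm.const_smul _) ?_ ?_
      fun n t ht => hX.identDistrib (fun _ => hXm.of_uncurry_left) hT ht
    · filter_upwards [ae_restrict_mem measurableSet_Ioc] with t ht using ht.1.le
    · exact hXm.comp ((measurable_fst.const_mul T).prodMk measurable_snd)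
    · filter_upwards [hXi] with ω hω using integrableOn_Ioc_comp_mul_left hT (hω T hT)
    · filter_upwards [hXi] with ω hω using (hω 1 one_pos).smul _
  have hscaled := hunit.comp (measurable_const_smul T)
  simpa only [Function.comp_def, setIntegral_Ioc_eq_smul_comp_mul_left _ hT, integral_smul,
    smul_smul, Real.rpow_add hT, Real.rpow_one] using hscaled

end IsSelfSimilar

lemma measure_lt_rpow_le_measure_le {A ξ : Ω → ℝ} {p y : ℝ} (hp : 0 < p) (hy : 0 ≤ y)
    (hξ : ∀ ω, 0 ≤ ξ ω) (hξA : ∀ᵐ ω ∂P, ξ ω ^ p ≤ A ω) :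
    P {ω | A ω < y ^ p} ≤ P {ω | ξ ω ≤ y} := by
  refine measure_mono_ae ?_
  filter_upwards [hξA] with ω hω hlt
  exact ((Real.rpow_lt_rpow_iff (hξ ω) hy hp).1 (hω.trans_lt hlt)).le

theorem stmt_6_general [BorelSpace E] [IsProbabilityMeasure P] {X : ℝ → Ω → E} {p H : ℝ}
    (hp : 0 < p) (hXm : Measurable (Function.uncurry X))
    (hXi : ∀ᵐ ω ∂P, ∀ T > (0 : ℝ), IntegrableOn (fun t => ‖X t ω‖ ^ p) (Ioc 0 T))
    (hX : IsSelfSimilar P X H) {C : ℝ} {ξ : Ω → ℝ} (hξ : ∀ ω, 0 ≤ ξ ω)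
    (hξC : ∀ y : ℝ, 0 ≤ y → P {ω | ξ ω ≤ y} ≤ ENNReal.ofReal (C * y))
    (hξX : ∀ᵐ ω ∂P, ξ ω ^ p ≤ ∫ t in Ioc (0 : ℝ) 1, ‖X t ω‖ ^ p)
    (ε : ℝ) {T : ℝ} (hT : 0 < T) {x : ℝ} (hx : 0 < x) :
    P {ω | (∫ t in Ioc 0 T, ‖X t ω‖ ^ p) < x * T ^ (1 + ε)}
      ≤ ENNReal.ofReal (C * x ^ (1 / p) * T ^ (-(H - ε / p))) := by
  set y := x ^ (1 / p) * T ^ (-(H - ε / p)) with hy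
  have hy_nonneg : 0 ≤ y := by positivity
  have hy_rpow : x * T ^ (1 + ε) = T ^ (1 + p * H) * y ^ p := by
    rw [hy, Real.mul_rpow (by positivity) (by positivity), ← Real.rpow_mul hx.le,
      ← Real.rpow_mul hT.le, one_div_mul_cancel hp.ne', Real.rpow_one, mul_left_comm,
      ← Real.rpow_add hT]
    congr 2
    field_simp
    ring
  have hscaling := (hX.norm_rpow (fun _ => hXm.of_uncurry_left) p).identDistrib_integral_Ioc
    (hXm.norm.pow_const p) hXi hT
  calc P {ω | (∫ t in Ioc 0 T, ‖X t ω‖ ^ p) < x * T ^ (1 + ε)}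
      = P {ω | T ^ (1 + p * H) * (∫ t in Ioc (0 : ℝ) 1, ‖X t ω‖ ^ p) < x * T ^ (1 + ε)} :=
        hscaling.measure_mem_eq measurableSet_Iio
    _ = P {ω | (∫ t in Ioc (0 : ℝ) 1, ‖X t ω‖ ^ p) < y ^ p} := by
        simp only [hy_rpow, mul_lt_mul_iff_right₀ (Real.rpow_pos_of_pos hT (1 + p * H))]
    _ ≤ P {ω | ξ ω ≤ y} := measure_lt_rpow_le_measure_le hp hy_nonneg hξ hξX
    _ ≤ ENNReal.ofReal (C * x ^ (1 / p) * T ^ (-(H - ε / p))) := by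
        simpa only [hy, mul_assoc] using hξC y hy_nonneg

end SelfSimilar

end

/-- quantitative small-value estimate for a self-similar process. Under the
same hypotheses as Statement 5, for every `ε ∈ (0, pH)`, `T ≥ 1` and `x > 0`,
`P[∫₀^T |X_t|^p dt < x T^{1+ε}] ≤ C x^{1/p} T^{-(H - ε/p)}`. -/
theorem stmt_6
    {Ω : Type*} [MeasurableSpace Ω] (P : Measure Ω) [IsProbabilityMeasure P]
    (X : ℝ → Ω → ℝ) (p H : ℝ) (hp : 1 < p) (hH : H ∈ Ioo (0:ℝ) 1)
    (hXmeas : Measurable (Function.uncurry X))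
    (hint : ∀ᵐ ω ∂P, ∀ T > (0:ℝ), IntegrableOn (fun t => |X t ω| ^ p) (Ioc 0 T))
    -- self-similarity with index H
    (hss : ∀ c > (0:ℝ), ∀ n : ℕ, ∀ t : Fin n → ℝ, (∀ i, 0 ≤ t i) →
      Measure.map (fun ω => fun i => X (c * t i) ω) P
        = Measure.map (fun ω => fun i => c ^ H * X (t i) ω) P)
    -- lower bound by ξ^p with P[ξ ≤ y] ≤ C y
    (C : ℝ) (hC : 0 < C) (ξ : Ω → ℝ) (hξnn : ∀ ω, 0 ≤ ξ ω)
    (hξ : ∀ y : ℝ, 0 ≤ y → P {ω | ξ ω ≤ y} ≤ ENNReal.ofReal (C * y))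
    (hdom : ∀ᵐ ω ∂P, ξ ω ^ p ≤ ∫ t in Ioc (0:ℝ) 1, |X t ω| ^ p) :
    ∀ ε ∈ Ioo (0:ℝ) (p * H), ∀ T : ℝ, 1 ≤ T → ∀ x > (0:ℝ),
      P {ω | (∫ t in Ioc (0:ℝ) T, |X t ω| ^ p) < x * T ^ (1 + ε)}
        ≤ ENNReal.ofReal (C * x ^ (1 / p) * T ^ (-(H - ε / p))) := by
  intro ε _ T hT x hx
  exact stmt_6_general (zero_lt_one.trans hp) hXmeas hint hss hξnn hξ hdom ε
    (zero_lt_one.trans_le hT) hx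
end
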